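/- arXiv:1209.3494 — 2 statements merged into one kernel-verified Lean document; each statement's English description precedes it below -/
import Mathlib

section
/- Let 0 < p < 1. For all real α, β with α ≥ β > 0 and α² + β² = 1, the fidelity of ρ(χ(α), Λ_p) satisfies F(ρ(χ(α), Λ_p)) ≤ 1 − p/2, with equality if and only if α² = 1/(2−p) (equivalently, |χ(α)⟩ = |χ₀⟩ := (1/√(2−p))|00⟩ + √((1−p)/(2−p))|11⟩). In particular the maximum pre-processed fidelity over all transmitted pure states is F_max = 1 − p/2, attained by a non-maximally entangled state. -/
open Matrix Complex
open scoped Kronecker ComplexOrder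

/-- Index type for two qubits: the product basis of ℂ² ⊗ ℂ². -/
abbrev Q2 := Fin 2 × Fin 2

/-- Kraus operator `M₀` of the amplitude damping channel. -/
noncomputable def M0 (p : ℝ) : Matrix (Fin 2) (Fin 2) ℂ :=
  !![1, 0; 0, (Real.sqrt (1 - p) : ℂ)]

/-- Kraus operator `M₁` of the amplitude damping channel. -/
noncomputable def M1 (p : ℝ) : Matrix (Fin 2) (Fin 2) ℂ :=
  !![0, (Real.sqrt p : ℂ); 0, 0]

/-- Outer product `|ψ⟩⟨ψ|` of a two-qubit vector. -/
noncomputable def outer (ψ : Q2 → ℂ) : Matrix Q2 Q2 ℂ :=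
  Matrix.of fun i j => ψ i * star (ψ j)

/-- The state `ρ(χ, Λ_p)` obtained by applying the amplitude damping channel
with parameter `p` to the second qubit: `Σᵢ (I ⊗ Mᵢ) ρ (I ⊗ Mᵢ)†`. -/
noncomputable def ampDamp (p : ℝ) (ρ : Matrix Q2 Q2 ℂ) : Matrix Q2 Q2 ℂ :=
  ((1 : Matrix (Fin 2) (Fin 2) ℂ) ⊗ₖ M0 p) * ρ * ((1 : Matrix (Fin 2) (Fin 2) ℂ) ⊗ₖ M0 p)ᴴ +
  ((1 : Matrix (Fin 2) (Fin 2) ℂ) ⊗ₖ M1 p) * ρ * ((1 : Matrix (Fin 2) (Fin 2) ℂ) ⊗ₖ M1 p)ᴴ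

/-- The pure state `|χ⟩ = a|00⟩ + b|11⟩`. -/
noncomputable def ketChi (a b : ℝ) : Q2 → ℂ :=
  fun ij => if ij = ((0 : Fin 2), (0 : Fin 2)) then (a : ℂ)
    else if ij = ((1 : Fin 2), (1 : Fin 2)) then (b : ℂ) else 0

/-- The maximally entangled state `|Φ⁺⟩ = (|00⟩ + |11⟩)/√2`. -/
noncomputable def phiPlus : Q2 → ℂ := ketChi (Real.sqrt 2)⁻¹ (Real.sqrt 2)⁻¹

/-- The optimal transmitted state `|χ₀⟩ = (1/√(2−p))|00⟩ + √((1−p)/(2−p))|11⟩`. -/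
noncomputable def ketChi0 (p : ℝ) : Q2 → ℂ :=
  ketChi (Real.sqrt (1 / (2 - p))) (Real.sqrt ((1 - p) / (2 - p)))

/-- Reduced density matrix on the first qubit (trace out the second qubit). -/
noncomputable def trSecond (ρ : Matrix Q2 Q2 ℂ) : Matrix (Fin 2) (Fin 2) ℂ :=
  Matrix.of fun i k => ∑ j : Fin 2, ρ (i, j) (k, j)

/-- Reduced density matrix on the second qubit (trace out the first qubit). -/
noncomputable def trFirst (ρ : Matrix Q2 Q2 ℂ) : Matrix (Fin 2) (Fin 2) ℂ :=
  Matrix.of fun j l => ∑ i : Fin 2, ρ (i, j) (i, l)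

/-- A unit vector `ψ ∈ ℂ²⊗ℂ²` is maximally entangled if both reduced density
matrices of `|ψ⟩⟨ψ|` equal `I/2`. -/
def MaxEnt (ψ : Q2 → ℂ) : Prop :=
  (∑ ij : Q2, Complex.normSq (ψ ij)) = 1 ∧
  trSecond (outer ψ) = (1 / 2 : ℂ) • (1 : Matrix (Fin 2) (Fin 2) ℂ) ∧
  trFirst (outer ψ) = (1 / 2 : ℂ) • (1 : Matrix (Fin 2) (Fin 2) ℂ)

/-- The real expectation value `⟨ψ|ρ|ψ⟩`. -/
noncomputable def expectation (ψ : Q2 → ℂ) (ρ : Matrix Q2 Q2 ℂ) : ℝ :=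
  (∑ i : Q2, ∑ j : Q2, star (ψ i) * ρ i j * ψ j).re

/-- Fidelity (fully entangled fraction): `F(ρ) = sup_Ψ ⟨Ψ|ρ|Ψ⟩` over maximally
entangled unit vectors `Ψ`. -/
noncomputable def Fid (ρ : Matrix Q2 Q2 ℂ) : ℝ :=
  sSup {x : ℝ | ∃ ψ : Q2 → ℂ, MaxEnt ψ ∧ x = expectation ψ ρ}

/-- Partial transposition on the second qubit: `(ρ^Γ)_{(i,j),(k,l)} = ρ_{(i,l),(k,j)}`. -/
def ptrans (ρ : Matrix Q2 Q2 ℂ) : Matrix Q2 Q2 ℂ :=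
  Matrix.of fun ij kl => ρ (ij.1, kl.2) (kl.1, ij.2)

/-- The Verstraete–Verschelde maximum achievable fidelity under trace-preserving LOCC,
as the value of the semidefinite program
`F*(ρ) = sup { 1/2 − Tr(X ρ^Γ) : X Hermitian, 0 ≤ X ≤ I, −I/2 ≤ X^Γ ≤ I/2 }`. -/
noncomputable def FStar (ρ : Matrix Q2 Q2 ℂ) : ℝ :=
  sSup {x : ℝ | ∃ X : Matrix Q2 Q2 ℂ,
    X.IsHermitian ∧ X.PosSemidef ∧ ((1 : Matrix Q2 Q2 ℂ) - X).PosSemidef ∧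
    (ptrans X + (1 / 2 : ℂ) • (1 : Matrix Q2 Q2 ℂ)).PosSemidef ∧
    ((1 / 2 : ℂ) • (1 : Matrix Q2 Q2 ℂ) - ptrans X).PosSemidef ∧
    x = 1 / 2 - ((X * ptrans ρ).trace).re}

/-- The Pauli matrix `σ_y`. -/
noncomputable def sigY : Matrix (Fin 2) (Fin 2) ℂ := !![0, -Complex.I; Complex.I, 0]

/-- The matrix `ρ (σ_y⊗σ_y) ρ̄ (σ_y⊗σ_y)` whose eigenvalues define the concurrence. -/
noncomputable def Rmat (ρ : Matrix Q2 Q2 ℂ) : Matrix Q2 Q2 ℂ :=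
  ρ * (sigY ⊗ₖ sigY) * ρ.map (starRingEnd ℂ) * (sigY ⊗ₖ sigY)

/-- `c` is the concurrence of `ρ`: `c = max(0, λ₁ − λ₂ − λ₃ − λ₄)` where
`λ₁ ≥ λ₂ ≥ λ₃ ≥ λ₄ ≥ 0` are the square roots of the eigenvalues (with multiplicity)
of `ρ (σ_y⊗σ_y) ρ̄ (σ_y⊗σ_y)`. -/
def IsConcurrence (ρ : Matrix Q2 Q2 ℂ) (c : ℝ) : Prop :=
  ∃ lam : Fin 4 → ℝ,
    (∀ i j : Fin 4, i ≤ j → lam j ≤ lam i) ∧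
    (∀ i : Fin 4, 0 ≤ lam i) ∧
    (Rmat ρ).charpoly = ∏ i : Fin 4, (Polynomial.X - Polynomial.C ((lam i : ℂ) ^ 2)) ∧
    c = max 0 (lam 0 - lam 1 - lam 2 - lam 3)

/-- `μ` is an eigenvalue of the matrix `A`. -/
def IsEigenvalue (A : Matrix Q2 Q2 ℂ) (μ : ℂ) : Prop :=
  ∃ v : Q2 → ℂ, v ≠ 0 ∧ A *ᵥ v = μ • v


theorem aux_expectation (p : ℝ) (hp0 : 0 < p) (hp1 : p < 1) (α β : ℝ) (ψ : Q2 → ℂ) :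
    expectation ψ (ampDamp p (outer (ketChi α β))) =
      (α * (ψ (0,0)).re + β * Real.sqrt (1 - p) * (ψ (1,1)).re) ^ 2 +
      (α * (ψ (0,0)).im + β * Real.sqrt (1 - p) * (ψ (1,1)).im) ^ 2 +
      β ^ 2 * (Real.sqrt p) ^ 2 * ((ψ (1,0)).re ^ 2 + (ψ (1,0)).im ^ 2) := by
  simp [expectation, ampDamp, outer, ketChi, M0, M1, Fintype.sum_prod_type, Fin.sum_univ_two,
    Matrix.mul_apply, Matrix.one_apply, Matrix.add_apply, Matrix.conjTranspose_apply]
  ring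

theorem aux_maxEnt (ψ : Q2 → ℂ) (h : MaxEnt ψ) :
    ((ψ (0,0)).re ^ 2 + (ψ (0,0)).im ^ 2) + ((ψ (1,0)).re ^ 2 + (ψ (1,0)).im ^ 2) = 1 / 2 ∧
    ((ψ (1,1)).re ^ 2 + (ψ (1,1)).im ^ 2) + ((ψ (1,0)).re ^ 2 + (ψ (1,0)).im ^ 2) = 1 / 2 := by
  obtain ⟨-, h1, h2⟩ := h
  have e1 := congrArg Complex.re (congrFun (congrFun h1 1) 1)
  have e2 := congrArg Complex.re (congrFun (congrFun h2 0) 0)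
  simp [trSecond, trFirst, outer, Fin.sum_univ_two] at e1 e2
  constructor <;> nlinarith

theorem aux_phiPlus : MaxEnt phiPlus := by
  have h : (Real.sqrt 2)⁻¹ * (Real.sqrt 2)⁻¹ = 1 / 2 := by
    rw [← mul_inv, Real.mul_self_sqrt (by norm_num)]; norm_num
  have hc : ((Real.sqrt 2 : ℝ) : ℂ)⁻¹ * ((Real.sqrt 2 : ℝ) : ℂ)⁻¹ = 1 / 2 := by
    have h' := congrArg (fun x : ℝ => (x : ℂ)) h
    push_cast at h'
    exact h'
  refine ⟨?_, ?_, ?_⟩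
  · simp [phiPlus, ketChi, Fintype.sum_prod_type, Fin.sum_univ_two]
    norm_num
  · ext i j
    fin_cases i <;> fin_cases j <;>
      simp [trSecond, outer, phiPlus, ketChi, Fin.sum_univ_two, hc]
  · ext i j
    fin_cases i <;> fin_cases j <;>
      simp [trFirst, outer, phiPlus, ketChi, Fin.sum_univ_two, hc]

theorem aux_Fid (p : ℝ) (hp0 : 0 < p) (hp1 : p < 1) (α β : ℝ) (hab : β ≤ α) (hb : 0 < β) :
    Fid (ampDamp p (outer (ketChi α β))) = (α + β * Real.sqrt (1 - p)) ^ 2 / 2 := by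
  apply IsGreatest.csSup_eq
  constructor
  · refine ⟨phiPlus, aux_phiPlus, ?_⟩
    rw [aux_expectation p hp0 hp1]
    have h : (Real.sqrt 2)⁻¹ ^ 2 = 1 / 2 := by
      rw [inv_pow, Real.sq_sqrt (by norm_num)]; norm_num
    have e0 : phiPlus (0,0) = (((Real.sqrt 2)⁻¹ : ℝ) : ℂ) := by simp [phiPlus, ketChi]
    have e1 : phiPlus (1,1) = (((Real.sqrt 2)⁻¹ : ℝ) : ℂ) := by simp [phiPlus, ketChi]
    have e2 : phiPlus (1,0) = 0 := by simp [phiPlus, ketChi]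
    rw [e0, e1, e2]
    simp only [Complex.ofReal_re, Complex.ofReal_im, Complex.zero_re, Complex.zero_im]
    linear_combination -(α + β * Real.sqrt (1 - p)) ^ 2 * h
  · rintro x ⟨ψ, hψ, rfl⟩
    rw [aux_expectation p hp0 hp1, Real.sq_sqrt hp0.le]
    obtain ⟨h1, h2⟩ := aux_maxEnt ψ hψ
    have hs0 := Real.sqrt_nonneg (1 - p)
    have hs2 := Real.sq_sqrt (show 0 ≤ 1 - p by linarith)
    set s := Real.sqrt (1 - p)
    set a := (ψ (0,0)).re
    set b := (ψ (0,0)).im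
    set c := (ψ (1,1)).re
    set d := (ψ (1,1)).im
    set N := (ψ (1,0)).re ^ 2 + (ψ (1,0)).im ^ 2 with hN
    have hN0 : 0 ≤ N := by positivity
    have hα : 0 < α := by linarith
    have hk : 0 ≤ α * β * s := by positivity
    have hbp : β ^ 2 * p ≤ (α + β * s) ^ 2 := by nlinarith [mul_pos hb hb, sq_nonneg (β*s)]
    have t1 := mul_nonneg hk (add_nonneg (sq_nonneg (a - c)) (sq_nonneg (b - d)))
    have t2 := mul_nonneg hN0 (sub_nonneg.2 hbp)
    have ha : a ^ 2 + b ^ 2 = 1 / 2 - N := by linarith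
    have hc : c ^ 2 + d ^ 2 = 1 / 2 - N := by linarith
    have key : (α + β * s) ^ 2 / 2 - ((α * a + β * s * c) ^ 2 + (α * b + β * s * d) ^ 2
        + β ^ 2 * p * N) = α * β * s * ((a - c) ^ 2 + (b - d) ^ 2)
        + N * ((α + β * s) ^ 2 - β ^ 2 * p) := by
      linear_combination (-α^2 - α * β * s) * ha + (-β^2*s^2 - α * β * s) * hc
    linarith

/-- For `0 < p < 1`, over all transmitted states `α|00⟩ + β|11⟩` with
`α ≥ β > 0`, `α² + β² = 1`, the pre-processed fidelity is at most `1 − p/2`, with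
equality iff `α² = 1/(2−p)`, i.e. iff the transmitted state is the non-maximally
entangled state `|χ₀⟩`. -/
theorem fidelity_max_preprocessed (p : ℝ) (hp0 : 0 < p) (hp1 : p < 1) :
    ∀ α β : ℝ, β ≤ α → 0 < β → α ^ 2 + β ^ 2 = 1 →
      Fid (ampDamp p (outer (ketChi α β))) ≤ 1 - p / 2 ∧
      (Fid (ampDamp p (outer (ketChi α β))) = 1 - p / 2 ↔ α ^ 2 = 1 / (2 - p)) := by
  intro α β hab hb h1
  rw [aux_Fid p hp0 hp1 α β hab hb]
  have hs0 := Real.sqrt_nonneg (1 - p)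
  have hs2 := Real.sq_sqrt (show 0 ≤ 1 - p by linarith)
  set s := Real.sqrt (1 - p)
  have hα : 0 < α := by linarith
  have key : (1 - p / 2) - (α + β * s) ^ 2 / 2 = (α * s - β) ^ 2 / 2 := by
    linear_combination (-(1 + s^2)/2) * h1 - hs2 / 2
  have h2p : 2 - p ≠ 0 := by linarith
  refine ⟨by nlinarith [sq_nonneg (α * s - β)], ?_⟩
  rw [eq_div_iff h2p]
  constructor
  · intro h
    have h0 : (α * s - β) ^ 2 = 0 := by linarith
    have h0 : α * s - β = 0 := by simpa using h0
    linear_combination h1 + (α * s + β) * h0 - α ^ 2 * hs2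
  · intro h
    have hf : (α * s - β) * (α * s + β) = 0 := by
      linear_combination h - h1 + α ^ 2 * hs2
    have h0 : α * s - β = 0 := by
      rcases mul_eq_zero.1 hf with h | h
      · exact h
      · have : 0 ≤ α * s := by positivity
        linarith
    rw [h0] at key
    linarith
end

section
/- Let 0 < p < 1 and let α, β be real with α ≥ β > 0, α² + β² = 1, and suppose p²/(1−p+p²) ≤ α² < 1. Then the maximum achievable fidelity under trace-preserving LOCC of ρ(χ(α), Λ_p) equals F*(ρ(χ(α), Λ_p)) = (1 + 2αβ√(1−p) − pβ²)/2; i.e., it coincides with the pre-processed fidelity F(ρ(χ(α), Λ_p)). -/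
open Matrix Complex
open scoped Kronecker ComplexOrder

/-- The antisymmetric vector `|01⟩ - |10⟩`. -/
noncomputable def vMinus : Q2 → ℂ :=
  fun i => if i = ((0 : Fin 2), (1 : Fin 2)) then 1 else
    if i = ((1 : Fin 2), (0 : Fin 2)) then -1 else 0

/-- The projector onto the singlet, the optimal `X`. -/
noncomputable def optX : Matrix Q2 Q2 ℂ := Matrix.of fun i j => (1 / 2 : ℂ) * vMinus i * vMinus j

lemma trace_formula (p α β : ℝ) (hp0 : 0 < p) (hp1 : p < 1) (X : Matrix Q2 Q2 ℂ) :
    ((X * ptrans (ampDamp p (outer (ketChi α β)))).trace).re =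
      α ^ 2 * (X (0, 0) (0, 0)).re + p * β ^ 2 * (X (1, 0) (1, 0)).re
      + (1 - p) * β ^ 2 * (X (1, 1) (1, 1)).re
      + α * β * Real.sqrt (1 - p) * ((X (0, 1) (1, 0)).re + (X (1, 0) (0, 1)).re) := by
  have h1 : Real.sqrt p * Real.sqrt p = p := Real.mul_self_sqrt hp0.le
  have h2 : Real.sqrt (1 - p) * Real.sqrt (1 - p) = 1 - p := Real.mul_self_sqrt (by linarith)
  simp [Matrix.trace, Matrix.mul_apply, ptrans, ampDamp, outer, ketChi, M0, M1,
    Fintype.sum_prod_type, Fin.sum_univ_two, Matrix.kroneckerMap_apply, Matrix.one_apply]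
  linear_combination ((X (1, 0) (1, 0)).re * β ^ 2) * h1 + ((X (1, 1) (1, 1)).re * β ^ 2) * h2

/-- A rank-one positive term plus a nonnegative diagonal matrix is positive semidefinite. -/
lemma psd_of (A : Matrix Q2 Q2 ℂ) (v : Q2 → ℂ) (d : Q2 → ℝ) (hd : ∀ i, 0 ≤ d i)
    (hA : A = (1 / 2 : ℝ) • vecMulVec v (star v) + Matrix.diagonal (fun i => (d i : ℂ))) :
    A.PosSemidef := by
  rw [hA]
  refine Matrix.PosSemidef.add ?_ ?_
  · exact (Matrix.posSemidef_vecMulVec_self_star v).smul (by norm_num)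
  · exact Matrix.PosSemidef.diagonal (fun i => by simpa using hd i)

lemma psd_re_nonneg {A : Matrix Q2 Q2 ℂ} (h : A.PosSemidef) (v : Q2 → ℂ) :
    0 ≤ (star v ⬝ᵥ (A *ᵥ v)).re :=
  (Complex.le_def.mp (h.dotProduct_mulVec_nonneg v)).1

lemma psd_diag_re {A : Matrix Q2 Q2 ℂ} (h : A.PosSemidef) (i : Q2) : 0 ≤ (A i i).re :=
  (Complex.le_def.mp (h.diag_nonneg (i := i))).1

lemma optX_psd : optX.PosSemidef := by
  refine psd_of _ vMinus (fun _ => 0) (fun _ => le_rfl) ?_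
  ext ⟨i, j⟩ ⟨k, l⟩
  fin_cases i <;> fin_cases j <;> fin_cases k <;> fin_cases l <;>
    norm_num [optX, vMinus, vecMulVec_apply, Matrix.diagonal_apply]

lemma optX_le_one : (1 - optX).PosSemidef := by
  refine psd_of _ (fun i => if i.1 = i.2 then 0 else 1)
    (fun i => if i.1 = i.2 then 1 else 0) (fun i => by split_ifs <;> norm_num) ?_
  ext ⟨i, j⟩ ⟨k, l⟩
  fin_cases i <;> fin_cases j <;> fin_cases k <;> fin_cases l <;>
    norm_num [optX, vMinus, vecMulVec_apply, Matrix.diagonal_apply, Matrix.one_apply]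

lemma optX_pt_lower : (ptrans optX + (1 / 2 : ℂ) • (1 : Matrix Q2 Q2 ℂ)).PosSemidef := by
  refine psd_of _ (ketChi 1 (-1))
    (fun i => if i.1 = i.2 then 0 else 1) (fun i => by split_ifs <;> norm_num) ?_
  ext ⟨i, j⟩ ⟨k, l⟩
  fin_cases i <;> fin_cases j <;> fin_cases k <;> fin_cases l <;>
    norm_num [ptrans, ketChi, optX, vMinus, vecMulVec_apply, Matrix.diagonal_apply,
      Matrix.one_apply]

lemma optX_pt_upper : ((1 / 2 : ℂ) • (1 : Matrix Q2 Q2 ℂ) - ptrans optX).PosSemidef := by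
  refine psd_of _ (ketChi 1 1) (fun _ => 0) (fun _ => le_rfl) ?_
  ext ⟨i, j⟩ ⟨k, l⟩
  fin_cases i <;> fin_cases j <;> fin_cases k <;> fin_cases l <;>
    norm_num [ptrans, ketChi, optX, vMinus, vecMulVec_apply, Matrix.diagonal_apply,
      Matrix.one_apply]

/-- For `0 < p < 1`, `α ≥ β > 0`, `α² + β² = 1` and
`p²/(1−p+p²) ≤ α² < 1`, the maximum achievable fidelity under trace-preserving LOCC of
`ρ(χ(α), Λ_p)` equals the pre-processed fidelity `(1 + 2αβ√(1−p) − pβ²)/2`. -/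
theorem FStar_regime_one (p α β : ℝ) (hp0 : 0 < p) (hp1 : p < 1)
    (hba : β ≤ α) (hb : 0 < β) (hnorm : α ^ 2 + β ^ 2 = 1)
    (hlow : p ^ 2 / (1 - p + p ^ 2) ≤ α ^ 2) (hhigh : α ^ 2 < 1) :
    FStar (ampDamp p (outer (ketChi α β))) =
      (1 + 2 * α * β * Real.sqrt (1 - p) - p * β ^ 2) / 2 := by
  have hs0 : 0 ≤ Real.sqrt (1 - p) := Real.sqrt_nonneg _
  have hs2 : Real.sqrt (1 - p) ^ 2 = 1 - p := Real.sq_sqrt (by linarith)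
  have ha : 0 < α := lt_of_lt_of_le hb hba
  have hkey : p * β ≤ α * Real.sqrt (1 - p) := by
    have hden : 0 < 1 - p + p ^ 2 := by nlinarith
    rw [div_le_iff₀ hden] at hlow
    refine (sq_le_sq₀ (by positivity) (by positivity)).mp ?_
    rw [mul_pow, mul_pow, hs2]
    nlinarith
  apply IsGreatest.csSup_eq
  constructor
  · refine ⟨optX, optX_psd.1, optX_psd, optX_le_one, optX_pt_lower, optX_pt_upper, ?_⟩
    rw [trace_formula p α β hp0 hp1]
    norm_num [optX, vMinus]
    ring
  · rintro x ⟨X, -, hX, -, -, hU, rfl⟩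
    rw [trace_formula p α β hp0 hp1]
    have h00 := psd_diag_re hX (0, 0)
    have h11 := psd_diag_re hX (1, 1)
    have h01 := psd_diag_re hU (0, 1)
    have hv := psd_re_nonneg hX (fun i => if i.1 = i.2 then 0 else 1)
    have hw := psd_re_nonneg hU (ketChi 1 (-1))
    simp [ptrans] at h01
    simp [dotProduct, mulVec, Fintype.sum_prod_type, Fin.sum_univ_two] at hv
    simp [dotProduct, mulVec, Fintype.sum_prod_type, Fin.sum_univ_two, ptrans, ketChi,
      Matrix.one_apply] at hw
    set s := Real.sqrt (1 - p)
    set a := (X (0, 0) (0, 0)).re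
    set b := (X (0, 1) (0, 1)).re
    set c := (X (1, 0) (1, 0)).re
    set d := (X (1, 1) (1, 1)).re
    set y := (X (0, 1) (1, 0)).re
    set z := (X (1, 0) (0, 1)).re
    have e1 : 0 ≤ α ^ 2 * a := by positivity
    have e2 : 0 ≤ (1 - p) * β ^ 2 * d :=
      mul_nonneg (mul_nonneg (by linarith) (by positivity)) h11
    have e3 : 0 ≤ p * β ^ 2 * (c + 1 / 2 + y + z) :=
      mul_nonneg (by positivity) (by linarith)
    have e4 : 0 ≤ β * (α * s - p * β) * (1 + y + z) :=
      mul_nonneg (mul_nonneg hb.le (by linarith)) (by linarith)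
    nlinarith
end
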